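/- Let k ≥ 1 and let G_k be the connected graph on 6k + 1 vertices obtained by taking k cycles of length 7 and identifying one vertex from each of them to a single common vertex x (the cycles being otherwise pairwise disjoint). Then depth(R/I(G_k)) = 2k; equivalently, pd_R(R/I(G_k)) = 4k + 1. -/

import Mathlib

/-!
The vertices `(i, 1)` and `(i, 4)` of the seven-cycles have pairwise disjoint closed neighbourhoods.
For any such packing `w` of a graph `G`, the sums of the variables over the closed neighbourhoods
`N[w j]` form a regular sequence on `R / I(G)`, and `pd (R / I(G)) ≤ |V| - |J|`. Both facts follow
by branching on a vertex `v` outside the packing with the exact sequence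
`0 → R / (I : v) → R / I → R / (I + (v)) → 0`, until the remaining ideal is generated by variables.

Modulo `I(G)` and these linear forms, the monomial `∏ j, X (w j)` is killed by every variable when
`X v * ∏ j, X (w j)`, with each `X (w j)` replaced by minus the sum of the neighbouring variables,
has only terms divisible by an edge. It is nonzero when the `w j` extend to an induced matching
`{w j, c j}`: substituting `X (w j) ↦ Y j`, `X (c j) ↦ -Y j` and `0` for the other variables
maps it to `∏ j, Y j`, which is not in the ideal of the squares `Y j ^ 2`.
Such a socle element bounds both invariants on the other side, through the long exact sequence of
`Ext(K, -)`.
-/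

open MvPolynomial CategoryTheory

noncomputable section

/-- A set of vertices is a vertex cover if it meets every edge. -/
def IsVertexCover {V : Type} (G : SimpleGraph V) (C : Set V) : Prop :=
  ∀ ⦃u v : V⦄, G.Adj u v → u ∈ C ∨ v ∈ C

/-- A vertex cover minimal with respect to inclusion. -/
def IsMinimalVertexCover {V : Type} (G : SimpleGraph V) (C : Set V) : Prop :=
  IsVertexCover G C ∧ ∀ C' ⊆ C, IsVertexCover G C' → C' = C

/-- `α₀(G)`: the minimum cardinality of a vertex cover of `G`. -/
def coverNumber {V : Type} (G : SimpleGraph V) : ℕ :=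
  sInf {k | ∃ C : Set V, IsVertexCover G C ∧ C.ncard = k}

/-- `bight(I(G))`: the maximum cardinality of a minimal vertex cover of `G`. -/
def bigHeight {V : Type} (G : SimpleGraph V) : ℕ :=
  sSup {k | ∃ C : Set V, IsMinimalVertexCover G C ∧ C.ncard = k}

/-- The edge ideal `I(G) ⊆ K[x_v : v ∈ V]`, generated by the monomials
`x_u * x_v` over the edges `{u,v}` of `G`. -/
def edgeIdeal (K : Type) [Field K] {V : Type} (G : SimpleGraph V) :
    Ideal (MvPolynomial V K) :=
  Ideal.span {m | ∃ u v : V, G.Adj u v ∧ m = X u * X v}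

/-- The cover ideal `J(G) = ⋂_{{u,v} ∈ E(G)} ⟨x_u, x_v⟩`. -/
def coverIdeal (K : Type) [Field K] {V : Type} (G : SimpleGraph V) :
    Ideal (MvPolynomial V K) :=
  ⨅ (u : V) (v : V) (_ : G.Adj u v), Ideal.span {X u, X v}

/-- The v-number of a graded ideal `I`: the least `d ≥ 0` such that there is a
homogeneous polynomial `f` of degree `d` with `I : f` a prime ideal. -/
def vNumber {K : Type} [Field K] {V : Type} (I : Ideal (MvPolynomial V K)) : ℕ :=
  sInf {d | ∃ f : MvPolynomial V K, f.IsHomogeneous d ∧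
    (I.colon (Ideal.span {f})).IsPrime}

/-- The homogeneous maximal ideal `⟨x_1, …, x_n⟩` of the polynomial ring. -/
def maxIdeal (K : Type) [Field K] (V : Type) : Ideal (MvPolynomial V K) :=
  Ideal.span (Set.range (X : V → MvPolynomial V K))

/-- The depth of the module `M` with respect to the ideal `J`: the supremum of
the lengths of regular sequences on `M` consisting of elements of `J`. -/
def mdepth {R : Type} [CommRing R] (J : Ideal R) (M : Type) [AddCommGroup M]
    [Module R M] : ℕ :=
  sSup {k | ∃ rs : List R, rs.length = k ∧ (∀ r ∈ rs, r ∈ J) ∧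
    RingTheory.Sequence.IsRegular M rs}

/-- The projective dimension of an `R`-module `M`, characterized by the
vanishing of `Ext^i(M, N)` for all `i > d` and all modules `N`. -/
def projDim (R : Type) [CommRing R] (M : ModuleCat.{0} R) : ℕ :=
  sInf {d : ℕ | ∀ (N : ModuleCat.{0} R) (i : ℕ), d < i →
    Subsingleton (((Ext R (ModuleCat.{0} R) i).obj (Opposite.op M)).obj N)}

/-- Auxiliary relation for the graph `G_k`: the common vertex `x` is `none`;
the `i`-th seven-cycle consists of `x` together with the six vertices
`(i, 0), …, (i, 5)`, with `x ~ (i,0) ~ (i,1) ~ ⋯ ~ (i,5) ~ x`. -/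
def gluedAdjAux (k : ℕ) : Option (Fin k × Fin 6) → Option (Fin k × Fin 6) → Prop
  | none, some p => p.2 = 0 ∨ p.2 = 5
  | some p, some q => p.1 = q.1 ∧ (p.2 : ℕ) + 1 = (q.2 : ℕ)
  | _, _ => False

/-- The connected graph `G_k` on `6k + 1` vertices obtained from `k` disjoint
cycles of length `7` by identifying one vertex of each to a common vertex. -/
def gluedCycles (k : ℕ) : SimpleGraph (Option (Fin k × Fin 6)) :=
  SimpleGraph.fromRel (gluedAdjAux k)

open RingTheory.Sequence

section ExtVanishing

universe w v u

/-- The vanishing of `Ext^i(N, M)` for all `i < n`: for a suitable test object `N`, this says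
that `M` has depth at least `n`. -/
def ExtVanishesBelow {C : Type u} [Category.{v} C] [Abelian C] [HasExt.{w} C] (N M : C) (n : ℕ) :
    Prop :=
  ∀ i < n, Subsingleton (Abelian.Ext N M i)

namespace ExtVanishesBelow

variable {C : Type u} [Category.{v} C] [Abelian C] [HasExt.{w} C] {N M M' : C} {m n : ℕ}

theorem mono (h : ExtVanishesBelow N M n) (hmn : m ≤ n) : ExtVanishesBelow N M m :=
  fun i hi => h i (hi.trans_le hmn)

theorem of_iso (e : M ≅ M') (h : ExtVanishesBelow N M n) : ExtVanishesBelow N M' n := fun i hi =>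
  have : Subsingleton ((Abelian.extFunctorObj N i).obj M) := h i hi
  ((Abelian.extFunctorObj N i).mapIso e).addCommGroupIsoToAddEquiv.symm.subsingleton

theorem X₃ {S : ShortComplex C} (hS : S.ShortExact) (h₂ : ExtVanishesBelow N S.X₂ n)
    (h₁ : ExtVanishesBelow N S.X₁ (n + 1)) : ExtVanishesBelow N S.X₃ n := by
  intro i hi
  have := h₂ i hi
  have := h₁ (i + 1) (by lia)
  refine subsingleton_of_forall_eq 0 fun x => ?_
  obtain ⟨y, rfl⟩ := Abelian.Ext.covariant_sequence_exact₃ N hS x rfl (Subsingleton.elim _ _)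
  rw [Subsingleton.elim y 0, Abelian.Ext.zero_comp]

theorem X₁ {S : ShortComplex C} (hS : S.ShortExact)
    (hf : ∀ i, ∀ y : Abelian.Ext N S.X₁ i, y.comp (Abelian.Ext.mk₀ S.f) (add_zero i) = 0)
    (h₃ : ExtVanishesBelow N S.X₃ n) : ExtVanishesBelow N S.X₁ (n + 1) := by
  intro i hi
  refine subsingleton_of_forall_eq 0 fun x => ?_
  cases i with
  | zero =>
    obtain ⟨g, rfl⟩ := (Abelian.Ext.mk₀_bijective N S.X₁).2 x
    have hg : g ≫ S.f = 0 := by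
      rw [← Abelian.Ext.mk₀_eq_zero_iff, ← Abelian.Ext.mk₀_comp_mk₀, hf]
    have := hS.mono_f
    rw [Limits.zero_of_comp_mono S.f hg, Abelian.Ext.mk₀_zero]
  | succ i =>
    obtain ⟨y, rfl⟩ := Abelian.Ext.covariant_sequence_exact₁ N hS x (hf _ x) rfl
    rw [(h₃ i (by lia)).elim y 0, Abelian.Ext.zero_comp]

theorem of_hasProjectiveDimensionLT [EnoughProjectives C] {p : ℕ}
    (hN : ∀ P : C, Projective P → ExtVanishesBelow N P (n + p))
    (hM : HasProjectiveDimensionLT M (p + 1)) : ExtVanishesBelow N M n := by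
  induction p generalizing n M with
  | zero => exact hN M (projective_iff_hasProjectiveDimensionLT_one.mpr hM)
  | succ p ih =>
    obtain ⟨P⟩ := EnoughProjectives.presentation M
    have hS : (ShortComplex.mk _ _ (Limits.kernel.condition P.f)).ShortExact :=
      { exact := ShortComplex.exact_kernel P.f }
    have hP := P.projective
    refine X₃ hS ((hN P.p hP).mono (by lia)) (ih (fun Q hQ => ?_) ?_)
    · exact (hN Q hQ).mono (by lia)
    · exact hS.hasProjectiveDimensionLT_X₁ (p + 1)
        (hasProjectiveDimensionLT_of_ge P.p 1 (p + 1) (by lia)) hM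

end ExtVanishesBelow

end ExtVanishing

section WeaklyRegular

universe u

variable {R : Type u} [CommRing R]

theorem ExtVanishesBelow.of_isWeaklyRegular {N : ModuleCat.{u} R} {rs : List R}
    (hN : ∀ r ∈ rs, r ∈ Module.annihilator R N) {M : ModuleCat.{u} R}
    (hM : IsWeaklyRegular M rs) : ExtVanishesBelow N M rs.length := by
  induction rs generalizing M with
  | nil => exact fun i hi => absurd hi i.not_lt_zero
  | cons r rs ih =>
    rw [List.forall_mem_cons] at hN
    rw [isWeaklyRegular_cons_iff] at hM
    refine X₁ hM.1.smulShortComplex_shortExact (fun i y => ?_)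
      (ih (M := ModuleCat.of R (QuotSMulTop r M)) hN.2 hM.2)
    have hr := Abelian.Ext.postcomp_smul_id_eq_zero_of_mem_annihilator (M := M) hN.1 i
    exact DFunLike.congr_fun (congrArg AddCommGrpCat.Hom.hom hr) y

variable {M : Type u} [AddCommGroup M] [Module R M]

theorem ExtVanishesBelow.quotient {N : ModuleCat.{u} R} {n : ℕ} {rs : List R}
    (hM : IsWeaklyRegular M rs)
    (h : ExtVanishesBelow N (ModuleCat.of R M) (n + rs.length)) :
    ExtVanishesBelow N (ModuleCat.of R (M ⧸ (Ideal.ofList rs • ⊤ : Submodule R M))) n := by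
  induction rs generalizing M with
  | nil => exact h.of_iso (Submodule.quotEquivOfEqBot _ (by simp)).symm.toModuleIso
  | cons r rs ih =>
    rw [isWeaklyRegular_cons_iff] at hM
    have hS := IsSMulRegular.smulShortComplex_shortExact (M := ModuleCat.of R M) hM.1
    exact (ih hM.2 (X₃ hS (h.mono (by simp)) h)).of_iso
      (Submodule.quotOfListConsSMulTopEquivQuotSMulTopInner M r rs).symm.toModuleIso

theorem hasProjectiveDimensionLT_quotient {d : ℕ} {rs : List R} (hM : IsWeaklyRegular M rs)
    (h : HasProjectiveDimensionLT (ModuleCat.of R M) d) :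
    HasProjectiveDimensionLT (ModuleCat.of R (M ⧸ (Ideal.ofList rs • ⊤ : Submodule R M)))
      (d + rs.length) := by
  induction rs generalizing M d with
  | nil =>
    exact hasProjectiveDimensionLT_of_iso
      (Submodule.quotEquivOfEqBot _ (by simp)).symm.toModuleIso d
  | cons r rs ih =>
    rw [isWeaklyRegular_cons_iff] at hM
    have hS := IsSMulRegular.smulShortComplex_shortExact (M := ModuleCat.of R M) hM.1
    have hr := hS.hasProjectiveDimensionLT_X₃ d h
      (hasProjectiveDimensionLT_of_ge (ModuleCat.of R M) d (d + 1) d.le_succ)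
    have := ih hM.2 hr
    rw [List.length_cons, add_comm rs.length, ← add_assoc]
    exact hasProjectiveDimensionLT_of_iso
      (Submodule.quotOfListConsSMulTopEquivQuotSMulTopInner M r rs).symm.toModuleIso _

theorem isWeaklyRegular_of_exact {R A B C : Type*} [CommRing R] [AddCommGroup A] [AddCommGroup B]
    [AddCommGroup C] [Module R A] [Module R B] [Module R C] {f : A →ₗ[R] B} {g : B →ₗ[R] C}
    (hf : Function.Injective f) (hfg : Function.Exact f g) (hg : Function.Surjective g)
    {rs : List R} (hA : IsWeaklyRegular A rs) (hC : IsWeaklyRegular C rs) :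
    IsWeaklyRegular B rs := by
  induction rs generalizing A B C with
  | nil => exact IsWeaklyRegular.nil R B
  | cons r rs ih =>
    rw [isWeaklyRegular_cons_iff] at hA hC ⊢
    have hr : Function.Injective (QuotSMulTop.map r f) := by
      have h₀ : Function.Exact (0 : A →ₗ[R] A) f := by
        rw [LinearMap.exact_iff, LinearMap.ker_eq_bot.mpr hf, LinearMap.range_zero]
      rw [← LinearMap.ker_eq_bot, LinearMap.exact_iff.mp <|
        QuotSMulTop.map_first_exact_on_four_term_exact_of_isSMulRegular_last h₀ hfg hC.1,
        map_zero, LinearMap.range_zero]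
    exact ⟨isSMulRegular_of_range_eq_ker hf (LinearMap.exact_iff.mp hfg).symm hA.1 hC.1,
      ih hr (QuotSMulTop.map_exact r hfg hg) (QuotSMulTop.map_surjective r hg) hA.2 hC.2⟩

end WeaklyRegular

section Colon

universe u

variable {R : Type u} [CommRing R] (I : Ideal R) (f : R)

/-- Multiplication by `f`, as a map `R ⧸ (I : f) → R ⧸ I`. -/
def colonMul : (R ⧸ I.colon {f}) →ₗ[R] R ⧸ I :=
  (I.colon {f}).liftQ (LinearMap.toSpanSingleton R (R ⧸ I) (Submodule.Quotient.mk f))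
    fun r hr => by
      rw [LinearMap.mem_ker, LinearMap.toSpanSingleton_apply, ← Submodule.Quotient.mk_smul,
        Submodule.Quotient.mk_eq_zero]
      exact Submodule.mem_colon_singleton.mp hr

theorem colonMul_injective : Function.Injective (colonMul I f) := by
  refine LinearMap.ker_eq_bot.mp (Submodule.ker_liftQ_eq_bot _ _ _ fun r hr => ?_)
  rwa [LinearMap.mem_ker, LinearMap.toSpanSingleton_apply, ← Submodule.Quotient.mk_smul,
    Submodule.Quotient.mk_eq_zero, ← Submodule.mem_colon_singleton] at hr

theorem colonMul_exact :
    Function.Exact (colonMul I f) (Submodule.factor (le_sup_left : I ≤ I ⊔ Ideal.span {f})) := by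
  rw [LinearMap.exact_iff, colonMul, Submodule.range_liftQ, Submodule.factor, Submodule.mapQ,
    Submodule.ker_liftQ, LinearMap.comp_id, Submodule.ker_mkQ, Submodule.map_sup,
    Submodule.mkQ_map_self, bot_sup_eq, Ideal.span, Submodule.map_span, Set.image_singleton,
    LinearMap.range_toSpanSingleton]
  rfl

/-- The short complex `R ⧸ (I : f) → R ⧸ I → R ⧸ (I + (f))`, along which edge ideals are
dismantled one vertex at a time. -/
def colonShortComplex : ShortComplex (ModuleCat.{u} R) :=
  ModuleCat.shortComplexOfCompEqZero (colonMul I f) (Submodule.factor le_sup_left)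
    (colonMul_exact I f).linearMap_comp_eq_zero

theorem colonShortComplex_shortExact : (colonShortComplex I f).ShortExact where
  exact := ModuleCat.shortComplex_exact _ (colonMul_exact I f)
  mono_f := (ModuleCat.mono_iff_injective _).mpr (colonMul_injective I f)
  epi_g := (ModuleCat.epi_iff_surjective _).mpr (Submodule.factor_surjective le_sup_left)

end Colon

section Depth

universe u

variable {R : Type u} [CommRing R] {J : Ideal R} {rs : List R}

theorem not_extVanishesBelow_of_smul_eq_zero {M : Type u} [AddCommGroup M] [Module R M]
    {x : M} (hx : x ≠ 0) (hJ : ∀ r ∈ J, r • x = 0) :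
    ¬ ExtVanishesBelow (ModuleCat.of R (R ⧸ J)) (ModuleCat.of R M) 1 := by
  intro h
  let φ : (R ⧸ J) →ₗ[R] M := J.liftQ (LinearMap.toSpanSingleton R M x) hJ
  have hφ : ModuleCat.ofHom φ = 0 := by
    rw [← Abelian.Ext.mk₀_eq_zero_iff]
    exact (h 0 one_pos).elim _ _
  have h₁ : φ (Submodule.Quotient.mk 1) = 0 := LinearMap.congr_fun (congrArg ModuleCat.Hom.hom hφ) _
  exact hx ((one_smul R x).symm.trans h₁)

theorem extVanishesBelow_of_projective (hrs : ∀ r ∈ rs, r ∈ J) (hR : IsWeaklyRegular R rs)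
    (P : ModuleCat.{u} R) [Projective P] :
    ExtVanishesBelow (ModuleCat.of R (R ⧸ J)) P rs.length := by
  have hP : Module.Projective R P := (IsProjective.iff_projective _).mpr ‹_›
  refine .of_isWeaklyRegular (fun r hr => ?_)
    (((TensorProduct.rid R P).isWeaklyRegular_congr rs).mp (hR.isWeaklyRegular_lTensor (M₂ := P)))
  simpa [Ideal.annihilator_quotient] using hrs r hr

variable {M : Type u} [AddCommGroup M] [Module R M] (hM : IsWeaklyRegular M rs)
  {x : M ⧸ (Ideal.ofList rs • ⊤ : Submodule R M)} (hx : x ≠ 0)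
  (hJx : ∀ r ∈ J, r • x = 0)

include hM hx hJx

theorem le_length_of_extVanishesBelow {n : ℕ}
    (h : ExtVanishesBelow (ModuleCat.of R (R ⧸ J)) (ModuleCat.of R M) n) : n ≤ rs.length := by
  by_contra! hn
  exact not_extVanishesBelow_of_smul_eq_zero hx hJx (.quotient hM (h.mono (by lia)))

theorem length_le_add_length_of_hasProjectiveDimensionLT {ys : List R} (hys : ∀ y ∈ ys, y ∈ J)
    (hR : IsWeaklyRegular R ys) {p : ℕ}
    (h : HasProjectiveDimensionLT (ModuleCat.of R M) (p + 1)) : ys.length ≤ p + rs.length := by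
  by_contra! hlt
  obtain ⟨n, hn⟩ : ∃ n, ys.length = n + p := ⟨ys.length - p, by lia⟩
  have hle := le_length_of_extVanishesBelow hM hx hJx (n := n) <|
    .of_hasProjectiveDimensionLT (fun P _ => hn ▸ extVanishesBelow_of_projective hys hR P) h
  lia

end Depth

section Invariants

universe w v u

theorem mdepth_eq_length {R : Type} [CommRing R] {J : Ideal R} {rs : List R}
    (hrs : ∀ r ∈ rs, r ∈ J) {M : Type} [AddCommGroup M] [Module R M] (hM : IsWeaklyRegular M rs)
    {x : M ⧸ (Ideal.ofList rs • ⊤ : Submodule R M)} (hx : x ≠ 0) (hJx : ∀ r ∈ J, r • x = 0) :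
    mdepth J M = rs.length := by
  have htop : (⊤ : Submodule R M) ≠ Ideal.ofList rs • ⊤ := fun h =>
    (Submodule.Quotient.nontrivial_iff.mp ⟨x, 0, hx⟩) h.symm
  refine IsGreatest.csSup_eq ⟨⟨rs, rfl, hrs, hM, htop⟩, ?_⟩
  rintro _ ⟨ys, rfl, hys, hreg⟩
  refine le_length_of_extVanishesBelow hM hx hJx (.of_isWeaklyRegular (fun y hy => ?_)
    hreg.toIsWeaklyRegular)
  simpa [Ideal.annihilator_quotient] using hys y hy

theorem subsingleton_ext_obj_iff {R : Type*} [Ring R] {C : Type u} [Category.{v} C] [Abelian C]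
    [Linear R C] [EnoughProjectives C] [HasExt.{w} C] (X Y : C) (i : ℕ) :
    Subsingleton (((Ext R C (i + 1)).obj (Opposite.op X)).obj Y) ↔
      Subsingleton (Abelian.Ext X Y (i + 1)) := by
  let P := projectiveResolution X
  have cocycles_iff : Subsingleton (((Ext R C (i + 1)).obj (Opposite.op X)).obj Y) ↔
      ∀ f : P.complex.X (i + 1) ⟶ Y, P.complex.d (i + 2) (i + 1) ≫ f = 0 →
        ∃ g : P.complex.X i ⟶ Y, P.complex.d (i + 1) i ≫ g = f := by
    rw [← ModuleCat.isZero_iff_subsingleton, (P.isoExt (R := R) (i + 1) Y).isZero_iff,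
      ← HomologicalComplex.exactAt_iff_isZero_homology,
      HomologicalComplex.exactAt_iff' _ i (i + 1) (i + 2) (by simp) (by simp),
      ShortComplex.moduleCat_exact_iff]
    rfl
  rw [cocycles_iff]
  constructor
  · intro h
    refine subsingleton_of_forall_eq 0 fun x => ?_
    obtain ⟨f, hf, rfl⟩ := P.extMk_surjective x (i + 2) rfl
    rw [P.extMk_eq_zero_iff f (i + 2) rfl hf i rfl]
    exact h f hf
  · intro h f hf
    rw [← P.extMk_eq_zero_iff f (i + 2) rfl hf i rfl]
    exact Subsingleton.elim _ _

variable {R : Type} [CommRing R] {M : ModuleCat.{0} R}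

theorem forall_subsingleton_ext_obj_iff {d : ℕ} :
    (∀ (N : ModuleCat.{0} R) (i : ℕ), d < i →
      Subsingleton (((Ext R (ModuleCat.{0} R) i).obj (Opposite.op M)).obj N)) ↔
    HasProjectiveDimensionLT M (d + 1) := by
  refine ⟨fun h => .mk fun i hi N e => ?_, fun h N i hi => ?_⟩ <;>
    obtain ⟨j, rfl⟩ := Nat.exists_eq_add_one_of_ne_zero (Nat.ne_zero_of_lt hi)
  · exact ((subsingleton_ext_obj_iff M N j).mp (h N (j + 1) (by lia))).elim _ _
  · exact (subsingleton_ext_obj_iff M N j).mpr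
      (HasProjectiveDimensionLT.subsingleton M (d + 1) _ (by lia) N)

theorem projDim_eq {p : ℕ} (hp : HasProjectiveDimensionLT M (p + 1))
    (hmin : ∀ d, HasProjectiveDimensionLT M (d + 1) → p ≤ d) : projDim R M = p :=
  IsLeast.csInf_eq ⟨forall_subsingleton_ext_obj_iff.mpr hp,
    fun d hd => hmin d (forall_subsingleton_ext_obj_iff.mp hd)⟩

end Invariants

section LinearForms

variable {V R : Type*} [CommRing R]

variable (R) in
/-- The monomial prime generated by the variables in `S`. -/
abbrev varIdeal (S : Set V) : Ideal (MvPolynomial V R) :=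
  Ideal.span (X '' S)

theorem ofList_map_X_smul_top (l : List V) :
    Ideal.ofList (l.map (X : V → MvPolynomial V R)) • ⊤ = varIdeal R {v | v ∈ l} := by
  rw [smul_eq_mul, Ideal.mul_top, Ideal.ofList]
  congr 1
  ext
  simp

theorem isSMulRegular_X_quotient_varIdeal {S : Set V} {v : V} (hv : v ∉ S) :
    IsSMulRegular (MvPolynomial V R ⧸ varIdeal R S) (X v : MvPolynomial V R) := by
  rw [isSMulRegular_quotient_iff_mem_of_smul_mem]
  intro p hp
  rw [smul_eq_mul, mem_ideal_span_X_image] at hp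
  refine mem_ideal_span_X_image.mpr fun m hm => ?_
  have hm' : Finsupp.single v 1 + m ∈ (X v * p).support := by
    rwa [mem_support_iff, coeff_X_mul, ← mem_support_iff]
  obtain ⟨u, hu, hum⟩ := hp _ hm'
  have hvu : v ≠ u := fun h => hv (h ▸ hu)
  exact ⟨u, hu, by simpa [Finsupp.single_apply, hvu] using hum⟩

theorem isWeaklyRegular_map_X {l : List V} (hl : l.Nodup) :
    IsWeaklyRegular (MvPolynomial V R) (l.map (X : V → MvPolynomial V R)) := by
  refine (isWeaklyRegular_iff _ _).mpr fun i hi => ?_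
  have hmem : l[i]'(by simpa using hi) ∉ l.take i := by
    rw [List.mem_take_iff_getElem]
    rintro ⟨j, hj, hji⟩
    have := hl.getElem_inj_iff.mp hji
    lia
  rw [List.getElem_map, ← List.map_take, ofList_map_X_smul_top]
  exact isSMulRegular_X_quotient_varIdeal hmem

/-- The elementary substitution `X v ↦ X v + q v`. -/
def shear (q : V → MvPolynomial V R) : MvPolynomial V R →ₐ[R] MvPolynomial V R :=
  aeval fun v => X v + q v

theorem shear_eq_self {q : V → MvPolynomial V R} {p : MvPolynomial V R}
    (hp : p ∈ supported R {v | q v = 0}) : shear q p = p := by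
  have hX : Set.EqOn (shear q) (AlgHom.id R _) (X '' {v | q v = 0}) := by
    rintro _ ⟨v, hv, rfl⟩
    simp_all [shear]
  exact AlgHom.adjoin_le_equalizer _ _ hX hp

/-- The substitution `X v ↦ X v + q v` as an automorphism, provided each `q v` only involves
variables that the substitution fixes. -/
def shearEquiv (q : V → MvPolynomial V R) (hq : ∀ v, q v ∈ supported R {u | q u = 0}) :
    MvPolynomial V R ≃ₐ[R] MvPolynomial V R :=
  AlgEquiv.ofAlgHom (shear q) (shear (-q))
    (by
      ext v
      have : shear q (-q v) = -q v := shear_eq_self (neg_mem (hq v))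
      simp_all [shear])
    (by
      ext v
      have : shear (-q) (q v) = q v := shear_eq_self (by simpa using hq v)
      simp_all [shear])

theorem isWeaklyRegular_map_X_add {q : V → MvPolynomial V R}
    (hq : ∀ v, q v ∈ supported R {u | q u = 0}) {l : List V} (hl : l.Nodup) :
    IsWeaklyRegular (MvPolynomial V R) (l.map fun v => X v + q v) := by
  refine ((shearEquiv q hq).toAddEquiv.isWeaklyRegular_congr ?_).mp (isWeaklyRegular_map_X hl)
  refine List.forall₂_map_left_iff.mpr (List.forall₂_map_right_iff.mpr ?_)
  refine List.forall₂_same.mpr fun v _ p => (map_mul (shearEquiv q hq) (X v) p).trans ?_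
  exact congrArg (· * _) (aeval_X _ v)

theorem isWeaklyRegular_quotient_varIdeal {J : Type*} {S : Finset V} {t : J → V}
    (ht : t.Injective) (htS : ∀ j, t j ∉ S) {L : J → MvPolynomial V R}
    (hL : ∀ j, L j - X (t j) ∈ supported R (Set.range t)ᶜ) {l : List J} (hl : l.Nodup) :
    IsWeaklyRegular (MvPolynomial V R ⧸ varIdeal R S) (l.map L) := by
  let q : V → MvPolynomial V R := Function.extend t (fun j => L j - X (t j)) 0
  have hqt (j : J) : q (t j) = L j - X (t j) := ht.extend_apply _ _ j
  have hq₀ {v : V} (hv : v ∉ Set.range t) : q v = 0 := Function.extend_apply' _ _ v hv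
  have hq (v : V) : q v ∈ supported R {u | q u = 0} := by
    by_cases hv : v ∈ Set.range t
    · obtain ⟨j, rfl⟩ := hv
      exact supported_mono (fun _ => hq₀) (hqt j ▸ hL j)
    · rw [hq₀ hv]
      exact zero_mem _
  have hnodup : (S.toList ++ l.map t).Nodup := by
    refine S.nodup_toList.append (hl.map ht) fun v hv hv' => ?_
    obtain ⟨j, -, rfl⟩ := List.mem_map.mp hv'
    exact htS j (S.mem_toList.mp hv)
  have hreg := isWeaklyRegular_map_X_add hq hnodup
  have hS : (S.toList.map fun v => X v + q v) = S.toList.map X :=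
    List.map_congr_left fun v hv => by
      rw [hq₀ (by rintro ⟨j, rfl⟩; exact htS j (S.mem_toList.mp hv)), add_zero]
  have hl : ((l.map t).map fun v => X v + q v) = l.map L := by
    rw [List.map_map]
    exact List.map_congr_left fun j _ => by simp [hqt]
  rw [List.map_append, isWeaklyRegular_append_iff, hS, hl] at hreg
  refine ((Submodule.quotEquivOfEq _ _ ?_).isWeaklyRegular_congr _).mp hreg.2
  rw [ofList_map_X_smul_top]
  simp

end LinearForms

universe u in
theorem hasProjectiveDimensionLT_quotient_varIdeal {V R : Type u} [CommRing R] (S : Finset V) :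
    HasProjectiveDimensionLT (ModuleCat.of (MvPolynomial V R)
      (MvPolynomial V R ⧸ varIdeal R S)) (S.card + 1) := by
  have hR : HasProjectiveDimensionLT
      (ModuleCat.of (MvPolynomial V R) (MvPolynomial V R)) 1 :=
    projective_iff_hasProjectiveDimensionLT_one.mp inferInstance
  have h := hasProjectiveDimensionLT_quotient (isWeaklyRegular_map_X S.nodup_toList) hR
  rw [List.length_map, Finset.length_toList, add_comm] at h
  have e : Ideal.ofList (S.toList.map (X : V → MvPolynomial V R)) • ⊤ =
      varIdeal R (S : Set V) := by
    rw [ofList_map_X_smul_top]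
    simp
  exact hasProjectiveDimensionLT_of_iso (Submodule.quotEquivOfEq _ _ e).toModuleIso _

section ColonInduction

universe u

variable {R : Type u} [CommRing R] {I : Ideal R} {f : R}

theorem isWeaklyRegular_quotient_of_colon {rs : List R}
    (hcolon : IsWeaklyRegular (R ⧸ I.colon {f}) rs)
    (hsup : IsWeaklyRegular (R ⧸ I ⊔ Ideal.span {f}) rs) : IsWeaklyRegular (R ⧸ I) rs :=
  isWeaklyRegular_of_exact (colonMul_injective I f) (colonMul_exact I f)
    (Submodule.factor_surjective le_sup_left) hcolon hsup

theorem hasProjectiveDimensionLT_quotient_of_colon {d : ℕ}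
    (hcolon : HasProjectiveDimensionLT (ModuleCat.of R (R ⧸ I.colon {f})) d)
    (hsup : HasProjectiveDimensionLT (ModuleCat.of R (R ⧸ I ⊔ Ideal.span {f})) d) :
    HasProjectiveDimensionLT (ModuleCat.of R (R ⧸ I)) d :=
  (colonShortComplex_shortExact I f).hasProjectiveDimensionLT_X₂ d hcolon hsup

end ColonInduction

section EdgeIdeal

variable (K : Type) [Field K] {V : Type} (G : SimpleGraph V)

/-- The edge ideal of `G` enlarged by the variables in `S`. Modulo isolated vertices, this is the
edge ideal of `G` with the vertices in `S` deleted. -/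
def edgeVarIdeal (S : Set V) : Ideal (MvPolynomial V K) :=
  edgeIdeal K G ⊔ varIdeal K S

variable {K G}

theorem edgeVarIdeal_eq_span_monomial (S : Set V) :
    edgeVarIdeal K G S = Ideal.span ((fun m => monomial m (1 : K)) ''
      ({m | ∃ u v, G.Adj u v ∧ m = Finsupp.single u 1 + Finsupp.single v 1} ∪
        (fun v => Finsupp.single v 1) '' S)) := by
  rw [edgeVarIdeal, edgeIdeal, varIdeal, ← Ideal.span_union, Set.image_union, Set.image_image]
  congr 2
  ext p
  constructor
  · rintro ⟨u, v, huv, rfl⟩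
    exact ⟨_, ⟨u, v, huv, rfl⟩, by simp [X, monomial_mul]⟩
  · rintro ⟨_, ⟨u, v, huv, rfl⟩, rfl⟩
    exact ⟨u, v, huv, by simp [X, monomial_mul]⟩

theorem single_add_single_le_iff {u v : V} (huv : u ≠ v) {m : V →₀ ℕ} :
    Finsupp.single u 1 + Finsupp.single v 1 ≤ m ↔ u ∈ m.support ∧ v ∈ m.support := by
  classical
  simp only [Finsupp.le_def, Finsupp.add_apply, Finsupp.single_apply, Finsupp.mem_support_iff]
  grind

theorem mem_edgeVarIdeal {S : Set V} {p : MvPolynomial V K} :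
    p ∈ edgeVarIdeal K G S ↔ ∀ m ∈ p.support,
      (∃ u v, G.Adj u v ∧ u ∈ m.support ∧ v ∈ m.support) ∨ ∃ v ∈ S, v ∈ m.support := by
  rw [edgeVarIdeal_eq_span_monomial, mem_ideal_span_monomial_image]
  refine forall₂_congr fun m _ => ?_
  simp only [Set.mem_union, or_and_right, exists_or, Set.exists_mem_image, Finsupp.single_le_iff,
    Nat.one_le_iff_ne_zero, ← Finsupp.mem_support_iff]
  refine or_congr_left ⟨?_, ?_⟩
  · rintro ⟨_, ⟨u, v, huv, rfl⟩, hm⟩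
    exact ⟨u, v, huv, (single_add_single_le_iff huv.ne).mp hm⟩
  · rintro ⟨u, v, huv, hm⟩
    exact ⟨_, ⟨u, v, huv, rfl⟩, (single_add_single_le_iff huv.ne).mpr hm⟩

theorem colon_edgeVarIdeal {S : Set V} {v : V} (hv : v ∉ S) :
    (edgeVarIdeal K G S).colon {X v} = edgeVarIdeal K G (S ∪ G.neighborSet v) := by
  classical
  ext p
  rw [Submodule.mem_colon_singleton, smul_eq_mul, mem_edgeVarIdeal, mem_edgeVarIdeal,
    support_mul_X, Finset.forall_mem_map]
  refine forall₂_congr fun m _ => ?_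
  have hsupp (u : V) : u ∈ (m + Finsupp.single v 1).support ↔ u ∈ m.support ∨ u = v := by
    simp only [Finsupp.mem_support_iff, Finsupp.add_apply, Finsupp.single_apply]
    grind
  simp only [addRightEmbedding_apply, hsupp, Set.mem_union, SimpleGraph.mem_neighborSet]
  grind [G.adj_comm, G.irrefl]

theorem edgeVarIdeal_insert (S : Set V) (v : V) :
    edgeVarIdeal K G (insert v S) = edgeVarIdeal K G S ⊔ Ideal.span {X v} := by
  rw [edgeVarIdeal, edgeVarIdeal, varIdeal, Set.image_insert_eq, Ideal.span_insert, sup_assoc,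
    sup_comm (Ideal.span {X v})]

theorem edgeVarIdeal_of_isVertexCover {S : Set V} (hS : IsVertexCover G S) :
    edgeVarIdeal K G S = varIdeal K S := by
  refine sup_eq_right.mpr (Ideal.span_le.mpr ?_)
  rintro _ ⟨u, v, huv, rfl⟩
  obtain hu | hv := hS huv
  · exact Ideal.mul_mem_right _ _ (Ideal.subset_span (Set.mem_image_of_mem X hu))
  · exact Ideal.mul_mem_left _ _ (Ideal.subset_span (Set.mem_image_of_mem X hv))

end EdgeIdeal

section Packing

variable {V J : Type*} {G : SimpleGraph V} {w : J → V}

variable (G) in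
/-- The closed neighbourhood `N[v]` of a vertex. -/
def closedNbhd (v : V) : Set V :=
  insert v (G.neighborSet v)

variable (G w) in
/-- A packing of `G`: a family of vertices, indexed by `J`, with pairwise disjoint closed
neighbourhoods. -/
def IsPacking : Prop :=
  Pairwise fun i j => Disjoint (closedNbhd G (w i)) (closedNbhd G (w j))

theorem mem_closedNbhd_self (v : V) : v ∈ closedNbhd G v :=
  Set.mem_insert _ _

theorem mem_closedNbhd_of_adj {v u : V} (h : G.Adj v u) : u ∈ closedNbhd G v :=
  Set.mem_insert_of_mem _ h

theorem IsPacking.eq_of_mem (hw : IsPacking G w) {i j : J} {v : V}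
    (hi : v ∈ closedNbhd G (w i)) (hj : v ∈ closedNbhd G (w j)) : i = j := by
  by_contra hij
  exact Set.disjoint_left.mp (hw hij) hi hj

theorem IsPacking.injective_of_mem (hw : IsPacking G w) {t : J → V}
    (ht : ∀ j, t j ∈ closedNbhd G (w j)) : t.Injective :=
  fun i j hij => hw.eq_of_mem (ht i) (hij ▸ ht j)

variable (G w) in
/-- The sets of deleted vertices that arise when `G` is dismantled by branching on vertices
outside the packing `w`: each `w j` either survives, or has a surviving neighbour all of whose own
neighbours are deleted. -/
def IsDismantling (S : Set V) : Prop :=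
  ∀ j, w j ∉ S ∨ ∃ v, G.Adj (w j) v ∧ v ∉ S ∧ G.neighborSet v ⊆ S

namespace IsDismantling

variable {S : Set V} {v : V}

theorem exists_notMem (hS : IsDismantling G w S) (j : J) : ∃ v ∈ closedNbhd G (w j), v ∉ S :=
  (hS j).elim (fun h => ⟨w j, mem_closedNbhd_self _, h⟩)
    fun ⟨v, hv, hvS, _⟩ => ⟨v, mem_closedNbhd_of_adj hv, hvS⟩

theorem union_neighborSet (hS : IsDismantling G w S) (hv : v ∉ S) :
    IsDismantling G w (S ∪ G.neighborSet v) := by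
  intro j
  by_cases hvj : G.Adj v (w j)
  · exact .inr ⟨v, hvj.symm, by simp [hv], Set.subset_union_right⟩
  · refine (hS j).imp (fun h => by simp [h, hvj]) ?_
    rintro ⟨u, hu, huS, huN⟩
    have hvu : ¬ G.Adj v u := fun h => hv (huN h.symm)
    exact ⟨u, hu, by simp [huS, hvu], huN.trans Set.subset_union_left⟩

theorem insert (hS : IsDismantling G w S) (hvw : v ∉ Set.range w)
    (hvN : ¬ G.neighborSet v ⊆ S) : IsDismantling G w (insert v S) := by
  intro j
  refine (hS j).imp (fun h => ?_) ?_
  · rintro (rfl | h')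
    exacts [hvw ⟨j, rfl⟩, h h']
  · rintro ⟨u, hu, huS, huN⟩
    refine ⟨u, hu, ?_, huN.trans (Set.subset_insert _ _)⟩
    rintro (rfl | h')
    exacts [hvN huN, huS h']

end IsDismantling

end Packing

section EdgeIdealInduction

variable {V : Type} {J : Type*} {G : SimpleGraph V} {w : J → V}

theorem IsPacking.isVertexCover (hw : IsPacking G w) {S : Set V}
    (hS : ∀ v ∉ S, v ∉ Set.range w → G.neighborSet v ⊆ S) : IsVertexCover G S := by
  intro u v huv
  by_contra! ⟨hu, hv⟩
  obtain ⟨i, rfl⟩ : u ∈ Set.range w := by_contra fun h => hv (hS u hu h huv)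
  obtain ⟨j, rfl⟩ : v ∈ Set.range w := by_contra fun h => hu (hS v hv h huv.symm)
  exact huv.ne (congrArg w (hw.eq_of_mem (mem_closedNbhd_of_adj huv) (mem_closedNbhd_self _)))

theorem IsPacking.edgeIdeal_induction {K : Type} [Field K] [Finite V] (hw : IsPacking G w)
    {P : Ideal (MvPolynomial V K) → Prop}
    (leaf : ∀ (S : Set V) (t : J → V), (∀ j, t j ∈ closedNbhd G (w j)) → (∀ j, t j ∉ S) →
      P (varIdeal K S))
    (branch : ∀ (I : Ideal (MvPolynomial V K)) (v : V), P (I.colon {X v}) →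
      P (I ⊔ Ideal.span {X v}) → P I) :
    P (edgeIdeal K G) := by
  suffices h : ∀ S, IsDismantling G w S → P (edgeVarIdeal K G S) by
    simpa [edgeVarIdeal, varIdeal] using h ∅ fun j => .inl (Set.notMem_empty _)
  intro S
  induction S using WellFoundedGT.induction with | ind S ih => ?_
  intro hS
  by_cases hcover : ∀ v ∉ S, v ∉ Set.range w → G.neighborSet v ⊆ S
  · choose t ht htS using hS.exists_notMem
    rw [edgeVarIdeal_of_isVertexCover (hw.isVertexCover hcover)]
    exact leaf S t ht htS
  · push Not at hcover
    obtain ⟨v, hvS, hvw, hvN⟩ := hcover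
    refine branch _ v ?_ ?_
    · rw [colon_edgeVarIdeal hvS]
      exact ih _ (by simpa using hvN) (hS.union_neighborSet hvS)
    · rw [← edgeVarIdeal_insert]
      exact ih _ (Set.ssubset_insert hvS) (hS.insert hvw hvN)

end EdgeIdealInduction

section ClosedNbhdSum

variable {V J : Type*} [Fintype V] {G : SimpleGraph V} {w : J → V}

open scoped Classical in
variable (G) in
/-- The sum of `x u` over the closed neighbourhood of `v`. When `x` is the family of variables and
`v` runs through a packing, these linear forms are a regular sequence modulo the edge ideal. -/
def closedNbhdSum {A : Type*} [AddCommMonoid A] (x : V → A) (v : V) : A :=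
  ∑ u with u ∈ closedNbhd G v, x u

theorem map_closedNbhdSum {A B F : Type*} [AddCommMonoid A] [AddCommMonoid B] [FunLike F A B]
    [AddMonoidHomClass F A B] (φ : F) (x : V → A) (v : V) :
    φ (closedNbhdSum G x v) = closedNbhdSum G (fun u => φ (x u)) v :=
  map_sum φ _ _

theorem IsPacking.closedNbhdSum_sub_X_mem_supported {R : Type*} [CommRing R] (hw : IsPacking G w)
    {t : J → V} (ht : ∀ j, t j ∈ closedNbhd G (w j)) (j : J) :
    closedNbhdSum G X (w j) - X (t j) ∈ supported R (Set.range t)ᶜ := by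
  classical
  rw [closedNbhdSum, ← Finset.add_sum_erase _ _ (by simpa using ht j), add_sub_cancel_left]
  refine sum_mem fun u hu => Algebra.subset_adjoin (Set.mem_image_of_mem X ?_)
  rw [Finset.mem_erase, Finset.mem_filter_univ] at hu
  rintro ⟨i, rfl⟩
  exact hu.1 (congrArg t (hw.eq_of_mem (ht i) hu.2))

end ClosedNbhdSum

section EdgeIdealQuotient

variable {K V : Type} {J : Type*} [Field K] [Fintype V] {G : SimpleGraph V} {w : J → V}

variable (K G w) in
/-- The closed neighbourhood sums of a packing, listed in some order. -/
abbrev packingForms [Fintype J] : List (MvPolynomial V K) :=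
  Finset.univ.toList.map fun j => closedNbhdSum G X (w j)

theorem IsPacking.isWeaklyRegular_packingForms [Fintype J] (hw : IsPacking G w) :
    IsWeaklyRegular (MvPolynomial V K ⧸ edgeIdeal K G) (packingForms K G w) := by
  classical
  refine hw.edgeIdeal_induction (P := fun I => IsWeaklyRegular (MvPolynomial V K ⧸ I) _)
    (fun S t ht htS => ?_) fun I v => isWeaklyRegular_quotient_of_colon
  have h := isWeaklyRegular_quotient_varIdeal (S := S.toFinset) (hw.injective_of_mem ht)
    (by simpa using htS) (hw.closedNbhdSum_sub_X_mem_supported (R := K) ht)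
    Finset.univ.nodup_toList
  rwa [Set.coe_toFinset] at h

theorem IsPacking.hasProjectiveDimensionLT_quotient_edgeIdeal [Fintype J] (hw : IsPacking G w)
    {p : ℕ} (hp : Fintype.card V ≤ p + Fintype.card J) :
    HasProjectiveDimensionLT (ModuleCat.of (MvPolynomial V K)
      (MvPolynomial V K ⧸ edgeIdeal K G)) (p + 1) := by
  classical
  refine hw.edgeIdeal_induction
    (P := fun I => HasProjectiveDimensionLT (ModuleCat.of _ (MvPolynomial V K ⧸ I)) _)
    (fun S t ht htS => ?_) fun _ _ => hasProjectiveDimensionLT_quotient_of_colon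
  have hdisj : Disjoint S.toFinset (Finset.univ.image t) := by
    simpa [Finset.disjoint_right] using htS
  have hcard := (Finset.card_union_of_disjoint hdisj).symm.trans_le (Finset.card_le_univ _)
  rw [Finset.card_image_of_injective _ (hw.injective_of_mem ht), Finset.card_univ] at hcard
  have h := hasProjectiveDimensionLT_quotient_varIdeal (R := K) S.toFinset
  rw [Set.coe_toFinset] at h
  exact hasProjectiveDimensionLT_of_ge _ (S.toFinset.card + 1) _ (by lia)

end EdgeIdealQuotient

section Socle

variable {V J : Type*} {G : SimpleGraph V} {w c : J → V}

variable (G w) in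
/-- No independent set consists of a vertex not adjacent to any `w j` together with one neighbour
of each `w j`. This is what makes `∏ j, X (w j)` a socle element modulo the edge ideal and the
forms `closedNbhdSum G X (w j)`. -/
def IsSaturating : Prop :=
  ∀ v, (∀ j, ¬ G.Adj (w j) v) → ∀ a : J → V, (∀ j, G.Adj (w j) (a j)) →
    ¬ G.IsIndepSet (insert v (Set.range a))

theorem mul_prod_eq_zero_of_not_isIndepSet [Fintype J] {A : Type*} [CommMonoidWithZero A]
    {x : V → A} (hG : ∀ u v, G.Adj u v → x u * x v = 0) {v : V} {a : J → V}
    (h : ¬ G.IsIndepSet (insert v (Set.range a))) : x v * ∏ j, x (a j) = 0 := by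
  classical
  have hva (j : J) (hj : G.Adj v (a j)) : x v * ∏ j, x (a j) = 0 :=
    eq_zero_of_zero_dvd <| hG _ _ hj ▸
      mul_dvd_mul_left _ (Finset.dvd_prod_of_mem (fun j => x (a j)) (Finset.mem_univ j))
  simp only [SimpleGraph.isIndepSet_iff, Set.Pairwise, not_forall, not_not] at h
  obtain ⟨_, rfl | ⟨i, rfl⟩, _, rfl | ⟨j, rfl⟩, -, hadj⟩ := h
  · exact absurd hadj G.irrefl
  · exact hva j hadj
  · exact hva i hadj.symm
  · have hij : i ≠ j := fun hij => hadj.ne (congrArg a hij)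
    have hdvd := Finset.prod_dvd_prod_of_subset _ _ (fun j => x (a j)) (Finset.subset_univ {i, j})
    rw [Finset.prod_pair hij, hG _ _ hadj] at hdvd
    rw [eq_zero_of_zero_dvd hdvd, mul_zero]

theorem closedNbhdSum_eq_add [Fintype V] [DecidableRel G.Adj] {A : Type*} [AddCommMonoid A]
    (x : V → A) (v : V) : closedNbhdSum G x v = x v + ∑ u with G.Adj v u, x u := by
  classical
  rw [closedNbhdSum, ← Finset.sum_insert (by simp)]
  congr 1
  ext u
  simp [closedNbhd]

theorem IsSaturating.mul_prod_eq_zero [Fintype V] [Fintype J] (hsat : IsSaturating G w)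
    {A : Type*} [CommRing A] {x : V → A} (hG : ∀ u v, G.Adj u v → x u * x v = 0)
    (hw : ∀ j, closedNbhdSum G x (w j) = 0) (v : V) : x v * ∏ j, x (w j) = 0 := by
  classical
  by_cases hv : ∃ j, G.Adj (w j) v
  · obtain ⟨j, hj⟩ := hv
    exact eq_zero_of_zero_dvd <| hG _ _ hj.symm ▸
      mul_dvd_mul_left _ (Finset.dvd_prod_of_mem (fun j => x (w j)) (Finset.mem_univ j))
  · have hneg (j : J) : x (w j) = ∑ u with G.Adj (w j) u, -x u := by
      rw [Finset.sum_neg_distrib]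
      exact eq_neg_of_add_eq_zero_left ((closedNbhdSum_eq_add x _).symm.trans (hw j))
    simp_rw [hneg, Finset.prod_univ_sum, Finset.mul_sum]
    refine Finset.sum_eq_zero fun a ha => ?_
    have hind := hsat v (not_exists.mp hv) a (by simpa using ha)
    rw [Finset.prod_neg, mul_left_comm, mul_prod_eq_zero_of_not_isIndepSet hG hind, mul_zero]

theorem prod_X_notMem_span_X_sq {R J : Type*} [CommRing R] [Nontrivial R] [Fintype J] :
    (∏ j, X j : MvPolynomial J R) ∉ Ideal.span (Set.range fun j => X j ^ 2) := by
  classical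
  have hspan : (Set.range fun j : J => (X j ^ 2 : MvPolynomial J R)) =
      (fun s => monomial s 1) '' Set.range fun j => Finsupp.single j 2 := by
    rw [← Set.range_comp]
    congr 1
    ext1 j
    simp [X_pow_eq_monomial]
  have hprod : (∏ j, X j : MvPolynomial J R) = monomial (∑ j, Finsupp.single j 1) 1 :=
    (monomial_sum_one _ _).symm
  rw [hspan, hprod, mem_ideal_span_monomial_image]
  intro h
  obtain ⟨_, ⟨j, rfl⟩, hj⟩ := h (∑ j, Finsupp.single j 1) (by simp [mem_support_iff])
  simpa [Finsupp.finsetSum_apply, Finsupp.single_apply] using hj j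

section MatchingSubst

variable {R : Type*} [CommRing R]

variable (w c R) in
/-- The substitution sending the ends `w j` and `c j` of the `j`-th edge of a matching to `X j` and
`-X j`, and all other variables to `0`. -/
def matchingSubst : V → MvPolynomial J R :=
  Function.extend (Sum.elim w c) (Sum.elim X fun j => -X j) 0

theorem IsPacking.injective_sumElim (hw : IsPacking G w) (hwc : ∀ j, G.Adj (w j) (c j)) :
    (Sum.elim w c).Injective :=
  (hw.injective_of_mem fun _ => mem_closedNbhd_self _).sumElim
    (hw.injective_of_mem fun j => mem_closedNbhd_of_adj (hwc j)) fun i j hij => by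
      obtain rfl : i = j :=
        hw.eq_of_mem (mem_closedNbhd_self _) (hij ▸ mem_closedNbhd_of_adj (hwc j))
      exact (hwc i).ne hij

theorem IsPacking.matchingSubst_left (hw : IsPacking G w) (hwc : ∀ j, G.Adj (w j) (c j)) (j : J) :
    matchingSubst w c R (w j) = X j :=
  (hw.injective_sumElim hwc).extend_apply _ _ (.inl j)

theorem IsPacking.matchingSubst_right (hw : IsPacking G w) (hwc : ∀ j, G.Adj (w j) (c j)) (j : J) :
    matchingSubst w c R (c j) = -X j :=
  (hw.injective_sumElim hwc).extend_apply _ _ (.inr j)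

theorem exists_eq_of_matchingSubst_ne_zero {v : V} (h : matchingSubst w c R v ≠ 0) :
    ∃ j, v = w j ∨ v = c j := by
  by_contra! hv
  refine h (Function.extend_apply' _ _ _ ?_)
  rintro ⟨j | j, rfl⟩
  exacts [(hv j).1 rfl, (hv j).2 rfl]

theorem IsPacking.closedNbhdSum_matchingSubst [Fintype V] (hw : IsPacking G w)
    (hwc : ∀ j, G.Adj (w j) (c j)) (j : J) :
    closedNbhdSum G (matchingSubst w c R) (w j) = 0 := by
  classical
  rw [closedNbhdSum, Finset.sum_eq_add (w j) (c j) (hwc j).ne, hw.matchingSubst_left hwc,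
    hw.matchingSubst_right hwc, add_neg_cancel]
  · rintro v hv ⟨hvw, hvc⟩
    rw [Finset.mem_filter_univ] at hv
    by_contra h
    obtain ⟨i, rfl | rfl⟩ := exists_eq_of_matchingSubst_ne_zero h
    · exact hvw (congrArg w (hw.eq_of_mem (mem_closedNbhd_self _) hv))
    · exact hvc (congrArg c (hw.eq_of_mem (mem_closedNbhd_of_adj (hwc i)) hv))
  · simp [mem_closedNbhd_self]
  · simp [mem_closedNbhd_of_adj (hwc j)]

theorem IsPacking.matchingSubst_mul_mem (hw : IsPacking G w) (hwc : ∀ j, G.Adj (w j) (c j))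
    (hc : G.IsIndepSet (Set.range c)) {u v : V} (huv : G.Adj u v) :
    matchingSubst w c R u * matchingSubst w c R v ∈ Ideal.span (Set.range fun j => X j ^ 2) := by
  by_cases hu : matchingSubst w c R u = 0
  · simp [hu]
  by_cases hv : matchingSubst w c R v = 0
  · simp [hv]
  have hcw (j : J) : c j ∈ closedNbhd G (w j) := mem_closedNbhd_of_adj (hwc j)
  have hsq (j : J) : (X j * X j : MvPolynomial J R) ∈ Ideal.span (Set.range fun j => X j ^ 2) :=
    Ideal.subset_span ⟨j, sq _⟩
  obtain ⟨i, rfl | rfl⟩ := exists_eq_of_matchingSubst_ne_zero hu <;>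
    obtain ⟨j, rfl | rfl⟩ := exists_eq_of_matchingSubst_ne_zero hv
  · exact absurd (congrArg w (hw.eq_of_mem (mem_closedNbhd_of_adj huv) (mem_closedNbhd_self _)))
      huv.ne
  · obtain rfl := hw.eq_of_mem (mem_closedNbhd_of_adj huv) (hcw j)
    simpa [hw.matchingSubst_left hwc, hw.matchingSubst_right hwc] using hsq i
  · obtain rfl := hw.eq_of_mem (mem_closedNbhd_of_adj huv.symm) (hcw i)
    simpa [hw.matchingSubst_left hwc, hw.matchingSubst_right hwc] using hsq j
  · exact absurd huv (hc ⟨i, rfl⟩ ⟨j, rfl⟩ huv.ne)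

end MatchingSubst

end Socle

section EdgeIdealSocle

variable {V : Type} {J : Type*} {G : SimpleGraph V} {w c : J → V}
variable (K : Type) [Field K] [Fintype V] [Fintype J]

theorem IsPacking.prod_X_notMem (hw : IsPacking G w) (hwc : ∀ j, G.Adj (w j) (c j))
    (hc : G.IsIndepSet (Set.range c)) :
    ∏ j, X (w j) ∉ edgeIdeal K G ⊔ Ideal.span (Set.range fun j => closedNbhdSum G X (w j)) := by
  intro h
  let φ := aeval (R := K) (matchingSubst w c K)
  have hle : edgeIdeal K G ⊔ Ideal.span (Set.range fun j => closedNbhdSum G X (w j)) ≤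
      (Ideal.span (Set.range fun j => X j ^ 2)).comap φ := by
    refine sup_le (Ideal.span_le.mpr ?_) (Ideal.span_le.mpr ?_)
    · rintro _ ⟨u, v, huv, rfl⟩
      simpa [φ] using hw.matchingSubst_mul_mem hwc hc huv
    · rintro _ ⟨j, rfl⟩
      simp [φ, map_closedNbhdSum, hw.closedNbhdSum_matchingSubst hwc]
  have hφ : φ (∏ j, X (w j)) = ∏ j, X j := by
    simp [φ, map_prod, hw.matchingSubst_left hwc]
  exact prod_X_notMem_span_X_sq (hφ ▸ Ideal.mem_comap.mp (hle h))

theorem IsSaturating.mul_prod_X_mem (hsat : IsSaturating G w) {p : MvPolynomial V K}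
    (hp : p ∈ maxIdeal K V) : p * ∏ j, X (w j) ∈
      edgeIdeal K G ⊔ Ideal.span (Set.range fun j => closedNbhdSum G X (w j)) := by
  set I := edgeIdeal K G ⊔ Ideal.span (Set.range fun j => closedNbhdSum G X (w j))
  suffices h : maxIdeal K V ≤ I.colon {∏ j, X (w j)} from Submodule.mem_colon_singleton.mp (h hp)
  refine Ideal.span_le.mpr ?_
  rintro _ ⟨v, rfl⟩
  refine Submodule.mem_colon_singleton.mpr (Ideal.Quotient.eq_zero_iff_mem.mp ?_)
  rw [smul_eq_mul, map_mul, map_prod]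
  refine hsat.mul_prod_eq_zero (x := fun v => Ideal.Quotient.mk I (X v)) (fun u v huv => ?_)
    (fun j => ?_) v
  · rw [← map_mul]
    exact Ideal.Quotient.eq_zero_iff_mem.mpr
      (Ideal.mem_sup_left (Ideal.subset_span ⟨u, v, huv, rfl⟩))
  · rw [← map_closedNbhdSum]
    exact Ideal.Quotient.eq_zero_iff_mem.mpr (Ideal.mem_sup_right (Ideal.subset_span ⟨j, rfl⟩))

end EdgeIdealSocle

theorem mk_mem_ofList_smul_top_iff {R : Type*} [CommRing R] {I : Ideal R} {rs : List R} {f : R} :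
    Ideal.Quotient.mk I f ∈ (Ideal.ofList rs • ⊤ : Submodule R (R ⧸ I)) ↔
      f ∈ I ⊔ Ideal.ofList rs := by
  rw [Ideal.smul_top_eq_map, Submodule.restrictScalars_mem, Ideal.Quotient.algebraMap_eq,
    Ideal.mem_quotient_iff_mem_sup, sup_comm]

theorem ofList_map_toList_univ {R J : Type*} [CommSemiring R] [Fintype J] (f : J → R) :
    Ideal.ofList (Finset.univ.toList.map f) = Ideal.span (Set.range f) := by
  simp [Ideal.ofList, Set.range]

section EdgeIdealDepth

variable {K V : Type} {J : Type*} [Field K] [Fintype J] {G : SimpleGraph V} {w c : J → V}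

theorem closedNbhdSum_X_mem_maxIdeal [Fintype V] (v : V) :
    closedNbhdSum G X v ∈ maxIdeal K V :=
  sum_mem fun u _ => Ideal.subset_span ⟨u, rfl⟩

theorem IsPacking.exists_ne_zero_forall_smul_eq_zero [Fintype V] (hw : IsPacking G w)
    (hwc : ∀ j, G.Adj (w j) (c j)) (hc : G.IsIndepSet (Set.range c)) (hsat : IsSaturating G w) :
    ∃ x : (MvPolynomial V K ⧸ edgeIdeal K G) ⧸ (Ideal.ofList (packingForms K G w) • ⊤ :
      Submodule (MvPolynomial V K) (MvPolynomial V K ⧸ edgeIdeal K G)),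
      x ≠ 0 ∧ ∀ r ∈ maxIdeal K V, r • x = 0 := by
  refine ⟨Submodule.Quotient.mk (Ideal.Quotient.mk _ (∏ j, X (w j))), ?_, fun r hr => ?_⟩
  · rw [Ne, Submodule.Quotient.mk_eq_zero, mk_mem_ofList_smul_top_iff, ofList_map_toList_univ]
    exact hw.prod_X_notMem K hwc hc
  · rw [← Submodule.Quotient.mk_smul, Submodule.Quotient.mk_eq_zero]
    change Ideal.Quotient.mk _ (r * _) ∈ _
    rw [mk_mem_ofList_smul_top_iff, ofList_map_toList_univ]
    exact hsat.mul_prod_X_mem K hr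

theorem IsPacking.mdepth_eq_card [Finite V] (hw : IsPacking G w)
    (hwc : ∀ j, G.Adj (w j) (c j)) (hc : G.IsIndepSet (Set.range c)) (hsat : IsSaturating G w) :
    mdepth (maxIdeal K V) (MvPolynomial V K ⧸ edgeIdeal K G) = Fintype.card J := by
  cases nonempty_fintype V
  obtain ⟨x, hx, hsocle⟩ := hw.exists_ne_zero_forall_smul_eq_zero (K := K) hwc hc hsat
  have hmem : ∀ r ∈ packingForms K G w, r ∈ maxIdeal K V := by
    simp [closedNbhdSum_X_mem_maxIdeal]
  rw [mdepth_eq_length hmem hw.isWeaklyRegular_packingForms hx hsocle]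
  simp

theorem IsPacking.projDim_add_card [Fintype V] (hw : IsPacking G w)
    (hwc : ∀ j, G.Adj (w j) (c j)) (hc : G.IsIndepSet (Set.range c)) (hsat : IsSaturating G w) :
    projDim (MvPolynomial V K) (ModuleCat.of _ (MvPolynomial V K ⧸ edgeIdeal K G)) +
      Fintype.card J = Fintype.card V := by
  obtain ⟨x, hx, hsocle⟩ := hw.exists_ne_zero_forall_smul_eq_zero (K := K) hwc hc hsat
  have hcard : Fintype.card J ≤ Fintype.card V :=
    Fintype.card_le_of_injective w (hw.injective_of_mem fun _ => mem_closedNbhd_self _)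
  have hX : ∀ y ∈ Finset.univ.toList.map X, y ∈ maxIdeal K V :=
    List.forall_mem_map.mpr fun v _ => Ideal.subset_span ⟨v, rfl⟩
  refine (congrArg (· + _) (projDim_eq (hw.hasProjectiveDimensionLT_quotient_edgeIdeal
    (Nat.sub_add_cancel hcard).ge) fun d hd => ?_)).trans (Nat.sub_add_cancel hcard)
  simpa using length_le_add_length_of_hasProjectiveDimensionLT hw.isWeaklyRegular_packingForms hx
    hsocle hX (isWeaklyRegular_map_X Finset.univ.nodup_toList) hd

end EdgeIdealDepth

section GluedCycles

variable {k : ℕ}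

theorem gluedCycles_adj_none_some {p : Fin k × Fin 6} :
    (gluedCycles k).Adj none (some p) ↔ p.2 = 0 ∨ p.2 = 5 := by
  simp [gluedCycles, gluedAdjAux]

theorem gluedCycles_adj_some_some {p q : Fin k × Fin 6} :
    (gluedCycles k).Adj (some p) (some q) ↔
      p.1 = q.1 ∧ ((p.2 : ℕ) + 1 = q.2 ∨ (q.2 : ℕ) + 1 = p.2) := by
  simp only [gluedCycles, SimpleGraph.fromRel_adj, gluedAdjAux, ne_eq, Option.some.injEq]
  grind

/-- The packing of `G_k` by the vertices `(i, 1)` and `(i, 4)`, whose closed neighbourhoods are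
the paths `(i, 0), (i, 1), (i, 2)` and `(i, 3), (i, 4), (i, 5)`. -/
def cycleCenter (p : Fin k × Fin 2) : Option (Fin k × Fin 6) :=
  some (p.1, ![1, 4] p.2)

/-- The neighbour of `cycleCenter p` that is adjacent to the common vertex. -/
def cycleEnd (p : Fin k × Fin 2) : Option (Fin k × Fin 6) :=
  some (p.1, ![0, 5] p.2)

theorem adj_cycleCenter_iff {p : Fin k × Fin 2} {v : Option (Fin k × Fin 6)} :
    (gluedCycles k).Adj (cycleCenter p) v ↔
      v = some (p.1, ![0, 3] p.2) ∨ v = some (p.1, ![2, 5] p.2) := by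
  obtain ⟨i, b⟩ := p
  rcases v with _ | ⟨j, a⟩
  · rw [SimpleGraph.adj_comm, cycleCenter, gluedCycles_adj_none_some]
    fin_cases b <;> simp
  · simp only [cycleCenter, gluedCycles_adj_some_some, Option.some.injEq, Prod.mk.injEq]
    fin_cases b <;> fin_cases a <;> simp [eq_comm]

theorem adj_cycleCenter_cycleEnd (p : Fin k × Fin 2) :
    (gluedCycles k).Adj (cycleCenter p) (cycleEnd p) := by
  obtain ⟨i, b⟩ := p
  rw [adj_cycleCenter_iff, cycleEnd]
  fin_cases b <;> simp

theorem mem_closedNbhd_cycleCenter {p : Fin k × Fin 2} {v : Option (Fin k × Fin 6)} :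
    v ∈ closedNbhd (gluedCycles k) (cycleCenter p) ↔
      ∃ a : Fin 6, v = some (p.1, a) ∧ (a : ℕ) / 3 = p.2 := by
  obtain ⟨i, b⟩ := p
  rw [closedNbhd, Set.mem_insert_iff, SimpleGraph.mem_neighborSet, adj_cycleCenter_iff, cycleCenter]
  fin_cases b
  · simpa [Fin.exists_fin_succ] using or_left_comm
  · simp [Fin.exists_fin_succ, or_left_comm]

theorem isPacking_cycleCenter : IsPacking (gluedCycles k) cycleCenter := by
  intro p q hpq
  refine Set.disjoint_left.mpr fun v hp hq => hpq ?_
  obtain ⟨a, rfl, hap⟩ := mem_closedNbhd_cycleCenter.mp hp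
  obtain ⟨b, hab, hbq⟩ := mem_closedNbhd_cycleCenter.mp hq
  obtain ⟨hi, rfl⟩ := Prod.mk.inj (Option.some.inj hab)
  exact Prod.ext hi (Fin.ext (hap.symm.trans hbq))

theorem isIndepSet_range_cycleEnd : (gluedCycles k).IsIndepSet (Set.range cycleEnd) := by
  rintro _ ⟨⟨i, b⟩, rfl⟩ _ ⟨⟨j, b'⟩, rfl⟩ - h
  rw [cycleEnd, cycleEnd, gluedCycles_adj_some_some] at h
  fin_cases b <;> fin_cases b' <;> simp at h

theorem isSaturating_cycleCenter (hk : 1 ≤ k) : IsSaturating (gluedCycles k) cycleCenter := by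
  intro v hv a ha hind
  have hva (q : Fin k × Fin 2) : ¬ (gluedCycles k).Adj v (a q) := fun h =>
    hind (.inl rfl) (.inr ⟨q, rfl⟩) h.ne h
  have haa (q r : Fin k × Fin 2) : ¬ (gluedCycles k).Adj (a q) (a r) := fun h =>
    hind (.inr ⟨q, rfl⟩) (.inr ⟨r, rfl⟩) h.ne h
  rcases v with _ | ⟨i, b⟩
  · obtain h₀ | h₂ := adj_cycleCenter_iff.mp (ha (⟨0, hk⟩, 0))
    · exact hva _ (h₀ ▸ gluedCycles_adj_none_some.mpr (.inl rfl))
    obtain h₃ | h₅ := adj_cycleCenter_iff.mp (ha (⟨0, hk⟩, 1))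
    · refine haa (⟨0, hk⟩, 0) (⟨0, hk⟩, 1) ?_
      rw [h₂, h₃]
      exact gluedCycles_adj_some_some.mpr ⟨rfl, .inl rfl⟩
    · exact hva _ (h₅ ▸ gluedCycles_adj_none_some.mpr (.inr rfl))
  · have hmem : some (i, b) ∈ closedNbhd (gluedCycles k) (cycleCenter (i, ⟨b / 3, by lia⟩)) :=
      mem_closedNbhd_cycleCenter.mpr ⟨b, rfl, rfl⟩
    obtain hcenter | hadj := hmem
    · exact hva _ (hcenter ▸ ha _)
    · exact hv _ hadj

end GluedCycles

/-- For the graph `G_k` obtained by gluing `k` seven-cycles at a common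
vertex, `depth(R/I(G_k)) = 2k`; equivalently, `pd(R/I(G_k)) = 4k + 1`. -/
theorem depth_gluedCycles
    {K : Type} [Field K] (k : ℕ) (hk : 1 ≤ k) :
    mdepth (maxIdeal K (Option (Fin k × Fin 6)))
      (MvPolynomial (Option (Fin k × Fin 6)) K ⧸ edgeIdeal K (gluedCycles k)) =
        2 * k ∧
    projDim (MvPolynomial (Option (Fin k × Fin 6)) K)
      (ModuleCat.of (MvPolynomial (Option (Fin k × Fin 6)) K)
        (MvPolynomial (Option (Fin k × Fin 6)) K ⧸ edgeIdeal K (gluedCycles k))) =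
      4 * k + 1 := by
  have hpacking := isPacking_cycleCenter (k := k)
  have hadj := adj_cycleCenter_cycleEnd (k := k)
  have hindep := isIndepSet_range_cycleEnd (k := k)
  have hsaturating := isSaturating_cycleCenter hk
  constructor
  · rw [hpacking.mdepth_eq_card hadj hindep hsaturating, Fintype.card_prod,
      Fintype.card_fin, Fintype.card_fin, mul_comm]
  · have h := hpacking.projDim_add_card (K := K) hadj hindep hsaturating
    simp only [Fintype.card_option, Fintype.card_prod, Fintype.card_fin] at h
    lia

end
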